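/- arXiv:2407.13762 — 2 statements merged into one kernel-verified Lean document; each statement's English description precedes it below -/
import Mathlib

section
/- Let n ≥ 2 and let θ : [0,∞) → 𝒳ₙ be continuous with multiradial Dirichlet energy J(θ) < ∞. Then for every j ∈ {1,…,n}, the gap θ^{j+1}_t − θ^j_t converges to 2π/n as t → ∞. -/
open MeasureTheory Filter Set
open scoped Real Topology ENNReal Classical

noncomputable section

/-- The configuration space `𝒳ₙ` of `n` ordered points on (a lift of) the circle:
`θ¹ < θ² < ⋯ < θⁿ < θ¹ + 2π`. -/
def Xspace (n : ℕ) : Set (Fin n → ℝ) :=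
  {x | StrictMono x ∧ ∀ i j : Fin n, x i < x j + 2 * π}

/-- The value `θ^{j+1}`, with the convention `θ^{n+1} = θ¹ + 2π`. -/
def nextVal {n : ℕ} (x : Fin n → ℝ) (j : Fin n) : ℝ :=
  if h : (j : ℕ) + 1 < n then x ⟨(j : ℕ) + 1, h⟩ else x ⟨0, j.pos⟩ + 2 * π

/-- The gap `θ^{j+1} - θ^j` (with wrap-around convention). -/
def gap {n : ℕ} (x : Fin n → ℝ) (j : Fin n) : ℝ := nextVal x j - x j

/-- The minimal gap `Δ(θ) = min_j (θ^{j+1} - θ^j)`. -/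
def minGap {n : ℕ} (x : Fin n → ℝ) : ℝ := ⨅ j : Fin n, gap x j

/-- `d(θ) := max_j |2π/n - (θ^{j+1} - θ^j)|`. -/
def dGap {n : ℕ} (x : Fin n → ℝ) : ℝ := ⨆ j : Fin n, |2 * π / n - gap x j|

/-- `φ^j(θ) = ∑_{k ≠ j} cot((θ^j - θ^k)/2)`. -/
def phi {n : ℕ} (x : Fin n → ℝ) (j : Fin n) : ℝ :=
  ∑ k ∈ Finset.univ.erase j, Real.cot ((x j - x k) / 2)

/-- `φ_a^j := (a/4) φ^j`. -/
def phiA {n : ℕ} (a : ℝ) (x : Fin n → ℝ) (j : Fin n) : ℝ := a / 4 * phi x j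

/-- Absolute continuity of every coordinate of `θ` on `[0, T]`: each component is the
integral of a (locally) integrable function. -/
def AbsCont {n : ℕ} (T : ℝ) (θ : ℝ → Fin n → ℝ) : Prop :=
  ∃ v : ℝ → Fin n → ℝ, (∀ j, IntegrableOn (fun s => v s j) (Icc 0 T)) ∧
    ∀ t ∈ Icc (0 : ℝ) T, ∀ j, θ t j = θ 0 j + ∫ s in (0 : ℝ)..t, v s j

/-- Truncated multiradial Dirichlet energy `J_T(θ)`. -/
def mEnergy (n : ℕ) (T : ℝ) (θ : ℝ → Fin n → ℝ) : ℝ≥0∞ :=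
  if AbsCont T θ then
    ENNReal.ofReal (1 / 2) *
      ∫⁻ s in Ioc (0 : ℝ) T,
        ENNReal.ofReal (∑ j, (deriv (fun t => θ t j) s - 2 * phi (θ s) j) ^ 2)
  else ⊤

/-- Multiradial Dirichlet energy `J(θ) = lim_{T→∞} J_T(θ)`, the supremum of the
nondecreasing family `J_T(θ)`. -/
def mEnergyInf (n : ℕ) (θ : ℝ → Fin n → ℝ) : ℝ≥0∞ := ⨆ T : ℝ, mEnergy n T θ

lemma Real.cot_neg' (x : ℝ) : Real.cot (-x) = -Real.cot x := by
  simp [Real.cot_eq_cos_div_sin, div_neg]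

lemma Real.cot_add_int_mul_pi (x : ℝ) (m : ℤ) : Real.cot (x + m * π) = Real.cot x := by
  rw [Real.cot_eq_cos_div_sin, Real.cot_eq_cos_div_sin, Real.cos_add_int_mul_pi,
    Real.sin_add_int_mul_pi]
  exact mul_div_mul_left _ _ (zpow_ne_zero _ (by norm_num))

lemma Real.measurable_cot : Measurable Real.cot := by
  have h : Real.cot = fun x => Real.cos x / Real.sin x :=
    funext Real.cot_eq_cos_div_sin
  rw [h]
  exact Real.measurable_cos.div Real.measurable_sin

/-- The cotangent decreases on `(0, π)` with slope at most `-1`. -/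
lemma Real.sub_le_cot_sub_cot {a b : ℝ} (ha : 0 < a) (hab : a ≤ b) (hb : b < π) :
    b - a ≤ Real.cot a - Real.cot b := by
  rcases hab.eq_or_lt with rfl | hlt
  · simp
  have hsa : 0 < Real.sin a := Real.sin_pos_of_pos_of_lt_pi ha (by linarith)
  have hsb : 0 < Real.sin b := Real.sin_pos_of_pos_of_lt_pi (by linarith) hb
  set d := (b - a) / 2 with hd
  have hd0 : 0 < d := by rw [hd]; linarith
  have hdpi : d < π / 2 := by rw [hd]; linarith
  have hcos : 0 < Real.cos d := Real.cos_pos_of_mem_Ioo ⟨by linarith, hdpi⟩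
  have hdc : d * Real.cos d ≤ Real.sin d := by
    have h := (Real.lt_tan hd0 hdpi).le
    rwa [Real.tan_eq_sin_div_cos, le_div_iff₀ hcos] at h
  have hprod : Real.sin a * Real.sin b ≤ Real.cos d ^ 2 := by
    have h1 : Real.cos (b - a) = 2 * Real.cos d ^ 2 - 1 := by
      rw [← Real.cos_two_mul]; congr 1; rw [hd]; ring
    have h2 := Real.neg_one_le_cos (b + a)
    rw [Real.cos_sub] at h1
    rw [Real.cos_add] at h2
    nlinarith
  have hsin : Real.sin (b - a) = 2 * Real.sin d * Real.cos d := by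
    rw [← Real.sin_two_mul]; congr 1; rw [hd]; ring
  have heq : Real.cot a - Real.cot b = Real.sin (b - a) / (Real.sin a * Real.sin b) := by
    rw [Real.cot_eq_cos_div_sin, Real.cot_eq_cos_div_sin, Real.sin_sub]
    field_simp
  rw [heq, le_div_iff₀ (mul_pos hsa hsb), hsin]
  have h3 : b - a = 2 * d := by rw [hd]; ring
  calc (b - a) * (Real.sin a * Real.sin b) ≤ (b - a) * Real.cos d ^ 2 := by gcongr
    _ = 2 * (d * Real.cos d) * Real.cos d := by rw [h3]; ring
    _ ≤ 2 * Real.sin d * Real.cos d := by gcongr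

/-- The displacement of the `j`-th point from the regular `n`-gon `j ↦ 2πj/n`. -/
def displacement {n : ℕ} (x : Fin n → ℝ) (j : Fin n) : ℝ := x j - 2 * π * j / n

/-- The total squared difference of displacements; it vanishes exactly when all gaps agree. -/
def spread {n : ℕ} (x : Fin n → ℝ) : ℝ :=
  ∑ j, ∑ k, (displacement x j - displacement x k) ^ 2

lemma phi_eq_sum_univ {n : ℕ} (x : Fin n → ℝ) (j : Fin n) :
    phi x j = ∑ k, Real.cot ((x j - x k) / 2) :=
  Finset.sum_erase _ (by simp [Real.cot_eq_cos_div_sin])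

/-- The regular `n`-gon is an equilibrium of the drift. -/
lemma sum_cot_regular {n : ℕ} (j : Fin n) :
    ∑ k : Fin n, Real.cot ((2 * π * j / n - 2 * π * k / n) / 2) = 0 := by
  have : NeZero n := ⟨j.pos.ne'⟩
  have hn : (n : ℝ) ≠ 0 := by exact_mod_cast j.pos.ne'
  set f : Fin n → ℝ := fun k => Real.cot ((2 * π * j / n - 2 * π * k / n) / 2) with hf
  have hrefl : ∀ k, f (j + j - k) = -f k := by
    intro k
    obtain ⟨m, hm⟩ : ∃ m : ℤ, (((j + j - k : Fin n) : ℕ) : ℤ) = 2 * j - k + m * n := by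
      have hadd := Nat.div_add_mod ((j : ℕ) + j) n
      rw [← Fin.val_add] at hadd
      have hadd' : (n : ℤ) * (((j : ℕ) + j) / n : ℕ) + ((j + j : Fin n) : ℕ) = j + j := by
        exact_mod_cast hadd
      rw [Fin.intCast_val_sub_eq_sub_add_ite]
      split_ifs
      · exact ⟨-(((j : ℕ) + j) / n : ℕ), by push_cast at hadd' ⊢; linarith⟩
      · exact ⟨1 - (((j : ℕ) + j) / n : ℕ), by push_cast at hadd' ⊢; linarith⟩
    have hm' : (((j + j - k : Fin n) : ℕ) : ℝ) = 2 * j - k + m * n := by exact_mod_cast hm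
    simp only [hf, hm']
    rw [← Real.cot_neg', ← Real.cot_add_int_mul_pi _ m]
    congr 1
    field_simp
    ring
  have hsum : ∑ k, f k = ∑ k, f (j + j - k) :=
    ((Equiv.subLeft (j + j)).sum_comp f).symm
  simp only [hrefl, Finset.sum_neg_distrib] at hsum
  linarith

lemma sum_mul_sum_antisymm {ι : Type*} [Fintype ι] (z : ι → ℝ) (a : ι → ι → ℝ)
    (ha : ∀ j k, a k j = -a j k) :
    2 * ∑ j, z j * ∑ k, a j k = ∑ j, ∑ k, (z j - z k) * a j k := by
  have h1 : ∑ j, ∑ k, z k * a j k = -∑ j, z j * ∑ k, a j k := by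
    rw [Finset.sum_comm]
    simp only [Finset.mul_sum, ← Finset.sum_neg_distrib]
    refine Finset.sum_congr rfl fun j _ => Finset.sum_congr rfl fun k _ => ?_
    rw [ha j k]; ring
  simp only [sub_mul, Finset.sum_sub_distrib, h1]
  simp only [Finset.mul_sum]
  simp only [two_mul, Finset.sum_add_distrib]
  ring

lemma sum_sub_mul_sub {ι : Type*} [Fintype ι] (z p : ι → ℝ) :
    ∑ j, ∑ k, (z j - z k) * (p j - p k) =
      2 * Fintype.card ι * ∑ j, z j * p j - 2 * (∑ j, z j) * ∑ j, p j := by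
  have h : ∀ j k, (z j - z k) * (p j - p k) = z j * p j + z k * p k - z j * p k - z k * p j :=
    fun j k => by ring
  simp only [h, Finset.sum_sub_distrib, Finset.sum_add_distrib, Finset.sum_const,
    Finset.card_univ, nsmul_eq_mul]
  simp only [← Finset.mul_sum, ← Finset.sum_mul]
  ring

lemma displacement_mul_cot_le {n : ℕ} {x : Fin n → ℝ} (hx : x ∈ Xspace n) (j k : Fin n) :
    (displacement x j - displacement x k) *
        (Real.cot ((x j - x k) / 2) - Real.cot ((2 * π * j / n - 2 * π * k / n) / 2)) ≤
      -((displacement x j - displacement x k) ^ 2 / 2) := by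
  have hn : (0 : ℝ) < n := by exact_mod_cast j.pos
  have key : ∀ a b : ℝ, 0 < a → a < π → 0 < b → b < π →
      (2 * a - 2 * b) * (Real.cot a - Real.cot b) ≤ -((2 * a - 2 * b) ^ 2 / 2) := by
    intro a b ha ha' hb hb'
    rcases le_total a b with h | h
    · nlinarith [Real.sub_le_cot_sub_cot ha h hb']
    · nlinarith [Real.sub_le_cot_sub_cot hb h ha']
  have main : ∀ j k : Fin n, k < j → (displacement x j - displacement x k) *
        (Real.cot ((x j - x k) / 2) - Real.cot ((2 * π * j / n - 2 * π * k / n) / 2)) ≤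
      -((displacement x j - displacement x k) ^ 2 / 2) := by
    intro j k hkj
    have h1 := hx.1 hkj
    have h2 := hx.2 j k
    have hkj' : (k : ℝ) < j := by exact_mod_cast hkj
    have hjn : (j : ℝ) < n := by exact_mod_cast j.isLt
    have hk0 : (0 : ℝ) ≤ k := Nat.cast_nonneg _
    have h3 : (2 * π * j / n - 2 * π * k / n) / 2 = π * ((j - k) / n) := by ring
    have h4 : 0 < ((j : ℝ) - k) / n := div_pos (by linarith) hn
    have h5 : ((j : ℝ) - k) / n < 1 := by rw [div_lt_one hn]; linarith
    have := key ((x j - x k) / 2) ((2 * π * j / n - 2 * π * k / n) / 2) (by linarith)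
      (by linarith) (by rw [h3]; exact mul_pos Real.pi_pos h4)
      (by rw [h3]; nlinarith [Real.pi_pos])
    have h6 : displacement x j - displacement x k =
        2 * ((x j - x k) / 2) - 2 * ((2 * π * j / n - 2 * π * k / n) / 2) := by
      simp only [displacement]; ring
    rw [h6]
    exact this
  rcases lt_trichotomy j k with h | rfl | h
  · have := main k j h
    rw [← neg_sub (x j), ← neg_sub (2 * π * (j : ℝ) / n), neg_div, neg_div, Real.cot_neg',
      Real.cot_neg'] at this
    linarith
  · simp
  · exact main j k h

/-- Strong monotonicity of the drift along the displacement from the regular `n`-gon. -/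
lemma sum_displacement_mul_phi_le {n : ℕ} {x : Fin n → ℝ} (hx : x ∈ Xspace n) :
    ∑ j, displacement x j * phi x j ≤ -(spread x / 4) := by
  have hphi : ∀ j, phi x j = ∑ k, (Real.cot ((x j - x k) / 2) -
      Real.cot ((2 * π * j / n - 2 * π * k / n) / 2)) := fun j => by
    rw [Finset.sum_sub_distrib, sum_cot_regular, sub_zero, phi_eq_sum_univ]
  have h := sum_mul_sum_antisymm (displacement x) (fun j k => Real.cot ((x j - x k) / 2) -
      Real.cot ((2 * π * j / n - 2 * π * k / n) / 2)) fun j k => by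
    rw [← neg_sub (x j), ← neg_sub (2 * π * (j : ℝ) / n), neg_div, neg_div, Real.cot_neg',
      Real.cot_neg']
    ring
  simp only [← hphi] at h
  have h2 : ∑ j, ∑ k, (displacement x j - displacement x k) *
        (Real.cot ((x j - x k) / 2) - Real.cot ((2 * π * j / n - 2 * π * k / n) / 2)) ≤
      -(spread x / 2) := by
    simp only [spread, Finset.sum_div, ← Finset.sum_neg_distrib]
    exact Finset.sum_le_sum fun j _ => Finset.sum_le_sum fun k _ => displacement_mul_cot_le hx j k
  linarith

lemma sum_phi {n : ℕ} (x : Fin n → ℝ) : ∑ j, phi x j = 0 := by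
  have h := sum_mul_sum_antisymm (fun _ => (1 : ℝ)) (fun j k => Real.cot ((x j - x k) / 2))
    fun j k => by rw [← neg_sub (x j), neg_div, Real.cot_neg']
  simpa [phi_eq_sum_univ] using h

/-- If the velocity is `p`, the rate of change of the spread is controlled by the deviation of `p`
from the drift `2φ`. -/
lemma spread_rate_le {n : ℕ} {x : Fin n → ℝ} (hx : x ∈ Xspace n) (p : Fin n → ℝ) :
    ∑ j, ∑ k, 2 * (displacement x j - displacement x k) * (p j - p k) ≤
      -(n * spread x) + 4 * ∑ j, (p j - 2 * phi x j) ^ 2 := by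
  rcases Nat.eq_zero_or_pos n with rfl | hn
  · simp [spread]
  have hn' : (0 : ℝ) < n := by exact_mod_cast hn
  set z := displacement x with hz
  set e : Fin n → ℝ := fun j => p j - 2 * phi x j with he
  have h1 := sum_sub_mul_sub z (phi x)
  rw [sum_phi, mul_zero, sub_zero, Fintype.card_fin] at h1
  have h2 := sum_displacement_mul_phi_le hx
  rw [← hz] at h2
  have h3 : ∑ j, ∑ k, (z j - z k) * (phi x j - phi x k) ≤ -(n * spread x / 2) := by
    rw [h1]; nlinarith
  have h4 : ∑ j, ∑ k, 2 * (z j - z k) * (e j - e k) ≤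
      n * spread x + 4 * ∑ j, e j ^ 2 := by
    have h5 : ∀ j k, 2 * (z j - z k) * (e j - e k) ≤
        n * (z j - z k) ^ 2 + (2 / n * e j ^ 2 + 2 / n * e k ^ 2) := by
      intro j k
      have h6 : 2 * (z j - z k) * (e j - e k) ≤
          n * (z j - z k) ^ 2 + 1 / n * (e j - e k) ^ 2 := by
        have : 0 ≤ 1 / (n : ℝ) * (n * (z j - z k) - (e j - e k)) ^ 2 := by positivity
        have h7 : 1 / (n : ℝ) * (n * (z j - z k) - (e j - e k)) ^ 2 =
            n * (z j - z k) ^ 2 + 1 / n * (e j - e k) ^ 2 - 2 * (z j - z k) * (e j - e k) := by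
          field_simp; ring
        linarith
      have h8 : 0 ≤ 1 / (n : ℝ) * (e j + e k) ^ 2 := by positivity
      have h9 : 2 / (n : ℝ) * e j ^ 2 + 2 / n * e k ^ 2 =
          1 / n * (e j - e k) ^ 2 + 1 / n * (e j + e k) ^ 2 := by ring
      linarith
    calc _ ≤ ∑ j, ∑ k, (n * (z j - z k) ^ 2 + (2 / n * e j ^ 2 + 2 / n * e k ^ 2)) :=
          Finset.sum_le_sum fun j _ => Finset.sum_le_sum fun k _ => h5 j k
      _ = n * spread x + 4 * ∑ j, e j ^ 2 := by
          simp only [Finset.sum_add_distrib, ← Finset.mul_sum, Finset.sum_const,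
            Finset.card_univ, Fintype.card_fin, nsmul_eq_mul, spread, ← hz]
          field_simp
          ring
  have h10 : ∑ j, ∑ k, 2 * (z j - z k) * (p j - p k) =
      4 * ∑ j, ∑ k, (z j - z k) * (phi x j - phi x k) +
        ∑ j, ∑ k, 2 * (z j - z k) * (e j - e k) := by
    simp only [Finset.mul_sum, ← Finset.sum_add_distrib, he]
    refine Finset.sum_congr rfl fun j _ => Finset.sum_congr rfl fun k _ => ?_
    ring
  rw [h10]
  linarith

lemma sq_gap_sub_le_spread {n : ℕ} (x : Fin n → ℝ) (j : Fin n) :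
    (gap x j - 2 * π / n) ^ 2 ≤ spread x := by
  have hn : (n : ℝ) ≠ 0 := by exact_mod_cast j.pos.ne'
  have hle : ∀ i k, (displacement x i - displacement x k) ^ 2 ≤ spread x := fun i k =>
    (Finset.single_le_sum (f := fun k => (displacement x i - displacement x k) ^ 2)
      (fun k _ => sq_nonneg _) (Finset.mem_univ k)).trans
    (Finset.single_le_sum (f := fun i => ∑ k, (displacement x i - displacement x k) ^ 2)
      (fun i _ => Finset.sum_nonneg fun k _ => sq_nonneg _) (Finset.mem_univ i))
  by_cases h : (j : ℕ) + 1 < n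
  · convert hle ⟨j + 1, h⟩ j using 2
    simp only [gap, nextVal, dif_pos h, displacement]
    push_cast
    field_simp
    ring
  · convert hle ⟨0, j.pos⟩ j using 2
    have hj : ((j : ℕ) : ℝ) = n - 1 := by
      have : (j : ℕ) + 1 = n := by omega
      rw [eq_sub_iff_add_eq]; exact_mod_cast this
    simp only [gap, nextVal, dif_neg h, displacement, hj]
    field_simp
    push_cast
    ring

lemma AbsolutelyContinuousOnInterval.congr {X : Type*} [PseudoMetricSpace X] {f g : ℝ → X}
    {a b : ℝ} (hf : AbsolutelyContinuousOnInterval f a b) (hfg : EqOn f g (uIcc a b)) :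
    AbsolutelyContinuousOnInterval g a b := by
  rw [absolutelyContinuousOnInterval_iff] at hf ⊢
  intro ε hε
  obtain ⟨δ, hδ, h⟩ := hf ε hε
  refine ⟨δ, hδ, fun E hE hlt => ?_⟩
  convert h E hE hlt using 1
  refine Finset.sum_congr rfl fun i hi => ?_
  have := hE.1 i hi
  rw [hfg this.1, hfg this.2]

lemma AbsolutelyContinuousOnInterval.sum {ι : Type*} (s : Finset ι) {f : ι → ℝ → ℝ} {a b : ℝ}
    (hf : ∀ i ∈ s, AbsolutelyContinuousOnInterval (f i) a b) :
    AbsolutelyContinuousOnInterval (fun t => ∑ i ∈ s, f i t) a b := by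
  induction s using Finset.induction_on with
  | empty =>
    simpa using (LipschitzWith.const (0 : ℝ)).lipschitzOnWith.absolutelyContinuousOnInterval
  | insert i s hi ih =>
    simp only [Finset.sum_insert hi]
    exact (hf i (Finset.mem_insert_self i s)).fun_add
      (ih fun k hk => hf k (Finset.mem_insert_of_mem hk))

lemma AbsCont.absolutelyContinuousOnInterval {n : ℕ} {T : ℝ} (hT : 0 ≤ T) {θ : ℝ → Fin n → ℝ}
    (h : AbsCont T θ) (j : Fin n) :
    AbsolutelyContinuousOnInterval (fun t => θ t j) 0 T := by
  obtain ⟨v, hv, hθ⟩ := h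
  have hint : IntervalIntegrable (fun s => v s j) volume 0 T := by
    rw [intervalIntegrable_iff_integrableOn_Icc_of_le hT]
    exact hv j
  have hconst : AbsolutelyContinuousOnInterval (fun _ : ℝ => θ 0 j) 0 T :=
    (LipschitzWith.const (θ 0 j)).lipschitzOnWith.absolutelyContinuousOnInterval
  refine (hconst.fun_add
    (hint.absolutelyContinuousOnInterval_intervalIntegral (c := 0) (by simp))).congr ?_
  intro t ht
  rw [uIcc_of_le hT] at ht
  exact (hθ t ht j).symm

lemma absolutelyContinuousOnInterval_spread {n : ℕ} {a b : ℝ} {θ : ℝ → Fin n → ℝ}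
    (h : ∀ j, AbsolutelyContinuousOnInterval (fun t => θ t j) a b) :
    AbsolutelyContinuousOnInterval (fun t => spread (θ t)) a b := by
  refine .sum _ fun j _ => .sum _ fun k _ => ?_
  have hdisp : ∀ i, AbsolutelyContinuousOnInterval (fun t => displacement (θ t) i) a b :=
    fun i => (h i).fun_sub (LipschitzWith.const _).lipschitzOnWith.absolutelyContinuousOnInterval
  simpa only [sq] using ((hdisp j).fun_sub (hdisp k)).fun_mul ((hdisp j).fun_sub (hdisp k))

lemma hasDerivAt_spread {n : ℕ} {s : ℝ} {θ : ℝ → Fin n → ℝ}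
    (h : ∀ j, DifferentiableAt ℝ (fun t => θ t j) s) :
    HasDerivAt (fun t => spread (θ t))
      (∑ j, ∑ k, 2 * (displacement (θ s) j - displacement (θ s) k) *
        (deriv (fun t => θ t j) s - deriv (fun t => θ t k) s)) s := by
  refine HasDerivAt.fun_sum fun j _ => HasDerivAt.fun_sum fun k _ => ?_
  have hdisp : ∀ i, HasDerivAt (fun t => displacement (θ t) i) (deriv (fun t => θ t i) s) s :=
    fun i => (h i).hasDerivAt.sub_const _
  simpa using ((hdisp j).fun_sub (hdisp k)).fun_pow 2

/-- A nonnegative function subject to linear damping and a forcing of convergent total mass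
tends to zero. -/
lemma tendsto_zero_of_damped {D G : ℝ → ℝ} {c L : ℝ} (hc : 0 < c)
    (hD : ContinuousOn D (Ici 0)) (hD0 : ∀ t, 0 ≤ D t) (hG : Tendsto G atTop (𝓝 L))
    (h : ∀ s t, 0 ≤ s → s ≤ t → D t + c * ∫ r in s..t, D r ≤ D s + (G t - G s)) :
    Tendsto D atTop (𝓝 0) := by
  rw [Metric.tendsto_atTop] at hG ⊢
  intro ε hε
  obtain ⟨S₀, hS₀⟩ := hG (ε / 4) (by positivity)
  set S := max S₀ 0 with hS
  have hS0 : 0 ≤ S := le_max_right _ _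
  have hGS : ∀ s t, S ≤ s → S ≤ t → G t - G s < ε / 2 := by
    intro s t hs ht
    have h1 := hS₀ s ((le_max_left _ _).trans hs)
    have h2 := hS₀ t ((le_max_left _ _).trans ht)
    rw [Real.dist_eq, abs_lt] at h1 h2
    linarith [h1.1, h2.2]
  obtain ⟨s, hs, hDs⟩ : ∃ s, S ≤ s ∧ D s < ε / 2 := by
    by_contra! hcon
    set K := (D S + ε) / (c * (ε / 2)) with hK
    have hK0 : 0 ≤ K := div_nonneg (by linarith [hD0 S]) (by positivity)
    have hcε : c * (ε / 2) ≠ 0 := by positivity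
    have hle : S ≤ S + K := by linarith
    have hint : ∫ _ in S..S + K, ε / 2 ≤ ∫ r in S..S + K, D r := by
      refine intervalIntegral.integral_mono_on hle (by simp) ?_ fun r hr => hcon r hr.1
      refine (hD.mono ?_).intervalIntegrable
      rw [uIcc_of_le hle]
      exact fun r hr => hS0.trans hr.1
    rw [intervalIntegral.integral_const, smul_eq_mul, add_sub_cancel_left] at hint
    have h1 := h S (S + K) hS0 hle
    have h2 := hGS S (S + K) le_rfl hle
    have h3 : c * (K * (ε / 2)) = D S + ε := by rw [hK]; field_simp
    have h4 := mul_le_mul_of_nonneg_left hint hc.le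
    linarith [hD0 (S + K)]
  refine ⟨s, fun t ht => ?_⟩
  have h1 := h s t (hS0.trans hs) ht
  have h2 := hGS s t hs (hs.trans ht)
  have h3 : 0 ≤ ∫ r in s..t, D r := intervalIntegral.integral_nonneg ht fun r _ => hD0 r
  rw [Real.dist_eq, sub_zero, abs_of_nonneg (hD0 t)]
  nlinarith

/-- The squared deviation of the velocity of `θ` from the drift `2φ`. -/
def energyDensity {n : ℕ} (θ : ℝ → Fin n → ℝ) (s : ℝ) : ℝ :=
  ∑ j, (deriv (fun t => θ t j) s - 2 * phi (θ s) j) ^ 2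

lemma energyDensity_nonneg {n : ℕ} (θ : ℝ → Fin n → ℝ) (s : ℝ) : 0 ≤ energyDensity θ s :=
  Finset.sum_nonneg fun _ _ => sq_nonneg _

lemma mEnergy_ne_top {n : ℕ} {θ : ℝ → Fin n → ℝ} (hJ : mEnergyInf n θ < ⊤) (T : ℝ) :
    mEnergy n T θ ≠ ⊤ :=
  ((le_iSup (fun T => mEnergy n T θ) T).trans_lt hJ).ne

lemma absCont_of_mEnergyInf_lt_top {n : ℕ} {θ : ℝ → Fin n → ℝ} (hJ : mEnergyInf n θ < ⊤)
    (T : ℝ) : AbsCont T θ := by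
  by_contra h
  exact mEnergy_ne_top hJ T (if_neg h)

lemma integrableOn_energyDensity {n : ℕ} {θ : ℝ → Fin n → ℝ} (hcont : ContinuousOn θ (Ici 0))
    (hJ : mEnergyInf n θ < ⊤) : IntegrableOn (energyDensity θ) (Ioi 0) := by
  have hmeas : AEStronglyMeasurable (energyDensity θ) (volume.restrict (Ioi 0)) := by
    have hθ : AEMeasurable θ (volume.restrict (Ioi 0)) :=
      (hcont.mono Ioi_subset_Ici_self).aemeasurable measurableSet_Ioi
    have hcoord : ∀ j, AEMeasurable (fun s => θ s j) (volume.restrict (Ioi 0)) :=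
      fun j => (measurable_pi_apply j).comp_aemeasurable hθ
    refine AEMeasurable.aestronglyMeasurable ?_
    refine Finset.aemeasurable_fun_sum _ fun j _ => ?_
    refine AEMeasurable.pow_const (.sub (measurable_deriv _).aemeasurable (.const_mul ?_ _)) _
    refine Finset.aemeasurable_fun_sum _ fun k _ => ?_
    exact Real.measurable_cot.comp_aemeasurable (((hcoord j).sub (hcoord k)).div_const 2)
  have hbound : ∀ T : ℝ, ∫⁻ s in Ioc 0 T, ENNReal.ofReal (energyDensity θ s) ≤
      2 * mEnergyInf n θ := by
    intro T
    have h1 : mEnergy n T θ ≤ mEnergyInf n θ := le_iSup (fun T => mEnergy n T θ) T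
    rw [mEnergy, if_pos (absCont_of_mEnergyInf_lt_top hJ T)] at h1
    have h2 : (2 : ℝ≥0∞) * ENNReal.ofReal (1 / 2) = 1 := by
      rw [← ENNReal.ofReal_ofNat 2, ← ENNReal.ofReal_mul (by norm_num)]
      norm_num
    calc _ = 2 * (ENNReal.ofReal (1 / 2) *
          ∫⁻ s in Ioc 0 T, ENNReal.ofReal (energyDensity θ s)) := by
            rw [← mul_assoc, h2, one_mul]
      _ ≤ _ := by gcongr; exact h1
  have htop : 2 * mEnergyInf n θ < ⊤ := ENNReal.mul_lt_top (by simp) hJ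
  have hcover : AECover (volume.restrict (Ioi (0 : ℝ))) atTop fun T : ℝ => Iic T :=
    aecover_Iic tendsto_id
  refine ⟨hmeas, ?_⟩
  rw [hasFiniteIntegral_iff_ofReal (.of_forall (energyDensity_nonneg θ))]
  refine lt_of_le_of_lt ?_ htop
  refine le_of_tendsto (hcover.lintegral_tendsto_of_countably_generated
    hmeas.aemeasurable.ennreal_ofReal) (.of_forall fun T => ?_)
  rw [Measure.restrict_restrict measurableSet_Iic, inter_comm, Ioi_inter_Iic]
  exact hbound T

lemma spread_nonneg {n : ℕ} (x : Fin n → ℝ) : 0 ≤ spread x :=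
  Finset.sum_nonneg fun _ _ => Finset.sum_nonneg fun _ _ => sq_nonneg _

/-- Integrated dissipation inequality for the spread along a finite-energy path. -/
lemma spread_add_integral_le {n : ℕ} {θ : ℝ → Fin n → ℝ} (hcont : ContinuousOn θ (Ici 0))
    (hX : ∀ t ∈ Ici (0 : ℝ), θ t ∈ Xspace n) (hJ : mEnergyInf n θ < ⊤)
    {s t : ℝ} (hs : 0 ≤ s) (hst : s ≤ t) :
    spread (θ t) + n * ∫ r in s..t, spread (θ r) ≤
      spread (θ s) + 4 * ∫ r in s..t, energyDensity θ r := by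
  have hAC : ∀ j, AbsolutelyContinuousOnInterval (fun t => θ t j) s t := fun j =>
    ((absCont_of_mEnergyInf_lt_top hJ t).absolutelyContinuousOnInterval (hs.trans hst) j).mono
      (by rw [uIcc_of_le hst, uIcc_of_le (hs.trans hst)]; exact Icc_subset_Icc_left hs)
  have hspread := absolutelyContinuousOnInterval_spread hAC
  have hint₁ : IntervalIntegrable (fun r => spread (θ r)) volume s t :=
    hspread.continuousOn.intervalIntegrable
  have hint₂ : IntervalIntegrable (energyDensity θ) volume s t := by
    rw [intervalIntegrable_iff_integrableOn_Ioc_of_le hst]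
    exact (integrableOn_energyDensity hcont hJ).mono_set fun r hr => hs.trans_lt hr.1
  have hint₁' : IntervalIntegrable (fun r => -(n * spread (θ r))) volume s t :=
    (hint₁.const_mul _).neg
  have hint₂' : IntervalIntegrable (fun r => 4 * energyDensity θ r) volume s t :=
    hint₂.const_mul 4
  have hdiff : ∀ᵐ r, ∀ j, r ∈ uIcc s t → DifferentiableAt ℝ (fun t => θ t j) r :=
    ae_all_iff.2 fun j => (hAC j).ae_differentiableAt
  have hle : ∫ r in s..t, deriv (fun r => spread (θ r)) r ≤
      ∫ r in s..t, (-(n * spread (θ r)) + 4 * energyDensity θ r) := by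
    refine intervalIntegral.integral_mono_ae_restrict hst hspread.intervalIntegrable_deriv
      (hint₁'.add hint₂') ?_
    filter_upwards [ae_restrict_of_ae hdiff, ae_restrict_mem measurableSet_Icc] with r hr hmem
    rw [uIcc_of_le hst] at hr
    rw [(hasDerivAt_spread fun j => hr j hmem).deriv]
    exact spread_rate_le (hX r (hs.trans hmem.1)) _
  rw [hspread.integral_deriv_eq_sub, intervalIntegral.integral_add hint₁' hint₂',
    intervalIntegral.integral_neg, intervalIntegral.integral_const_mul,
    intervalIntegral.integral_const_mul] at hle
  linarith

lemma tendsto_spread_zero {n : ℕ} (hn : 0 < n) {θ : ℝ → Fin n → ℝ}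
    (hcont : ContinuousOn θ (Ici 0)) (hX : ∀ t ∈ Ici (0 : ℝ), θ t ∈ Xspace n)
    (hJ : mEnergyInf n θ < ⊤) : Tendsto (fun t => spread (θ t)) atTop (𝓝 0) := by
  have hE := integrableOn_energyDensity hcont hJ
  refine tendsto_zero_of_damped (c := n) (G := fun t => 4 * ∫ r in (0 : ℝ)..t, energyDensity θ r)
    (by exact_mod_cast hn) ?_ (fun t => spread_nonneg _)
    ((intervalIntegral_tendsto_integral_Ioi 0 hE tendsto_id).const_mul 4) fun s t hs hst => ?_
  · have hcoord : ∀ j, ContinuousOn (fun t => θ t j) (Ici 0) := continuousOn_pi.1 hcont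
    unfold spread displacement
    fun_prop
  · have hint : ∀ t, 0 ≤ t → IntervalIntegrable (energyDensity θ) volume 0 t := fun t ht => by
      rw [intervalIntegrable_iff_integrableOn_Ioc_of_le ht]
      exact hE.mono_set fun r hr => hr.1
    rw [← mul_sub, intervalIntegral.integral_interval_sub_left (hint t (hs.trans hst)) (hint s hs)]
    exact spread_add_integral_le hcont hX hJ hs hst

/-- If `n ≥ 2` and `θ : [0,∞) → 𝒳ₙ` is continuous with finite
multiradial Dirichlet energy `J(θ) < ∞`, then every gap `θ^{j+1}_t - θ^j_t`
converges to `2π/n` as `t → ∞`. -/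
theorem finite_energy_gaps_converge
    (n : ℕ) (hn : 2 ≤ n) (θ : ℝ → Fin n → ℝ)
    (hcont : ContinuousOn θ (Ici 0))
    (hX : ∀ t ∈ Ici (0 : ℝ), θ t ∈ Xspace n)
    (hJ : mEnergyInf n θ < ⊤) :
    ∀ j : Fin n, Tendsto (fun t => gap (θ t) j) atTop (𝓝 (2 * π / n)) := by
  intro j
  have hspread := tendsto_spread_zero (by omega) hcont hX hJ
  have hsq : Tendsto (fun t => (gap (θ t) j - 2 * π / n) ^ 2) atTop (𝓝 0) :=
    squeeze_zero (fun _ => sq_nonneg _) (fun t => sq_gap_sub_le_spread (θ t) j) hspread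
  have habs : Tendsto (fun t => |gap (θ t) j - 2 * π / n|) atTop (𝓝 0) := by
    simpa [Real.sqrt_sq_eq_abs] using hsq.sqrt
  exact tendsto_sub_nhds_zero_iff.1 ((tendsto_zero_iff_abs_tendsto_zero _).2 habs)

end
end

section
/- For every initial configuration θ₀ ∈ 𝒳ₙ there exists a unique differentiable function θ : [0,∞) → 𝒳ₙ with θ(0) = θ₀ satisfying the system of differential equations dθ^j_t/dt = 2φ^j(θ_t) for all t ≥ 0 and all j ∈ {1,…,n}. -/
open MeasureTheory Filter Set
open scoped Real Topology ENNReal Classical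

noncomputable section

/-- Two solutions on `[0, b]` of an autonomous ODE with globally Lipschitz vector field agree if they
start from the same point. -/
theorem eqOn_Icc_of_lipschitzWith {E : Type*} [NormedAddCommGroup E] [NormedSpace ℝ E]
    {F : E → E} {K : NNReal} (hF : LipschitzWith K F) {f g : ℝ → E} {b : ℝ}
    (hf : ∀ t ∈ Icc 0 b, HasDerivWithinAt f (F (f t)) (Icc 0 b) t)
    (hg : ∀ t ∈ Icc 0 b, HasDerivWithinAt g (F (g t)) (Icc 0 b) t) (h0 : f 0 = g 0) :
    EqOn f g (Icc 0 b) :=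
  ODE_solution_unique (v := fun _ => F) (fun _ => hF)
    (fun t ht => (hf t ht).continuousWithinAt)
    (fun t ht => (hf t ⟨ht.1, ht.2.le⟩).mono_of_mem_nhdsWithin <|
      mem_of_superset (Icc_mem_nhdsGE ht.2) (Icc_subset_Icc_left ht.1))
    (fun t ht => (hg t ht).continuousWithinAt)
    (fun t ht => (hg t ⟨ht.1, ht.2.le⟩).mono_of_mem_nhdsWithin <|
      mem_of_superset (Icc_mem_nhdsGE ht.2) (Icc_subset_Icc_left ht.1)) h0

/-- A bounded, globally Lipschitz vector field has integral curves defined on `[0, ∞)`. -/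
theorem exists_hasDerivWithinAt_Ici_of_lipschitzWith {E : Type*} [NormedAddCommGroup E]
    [NormedSpace ℝ E] [CompleteSpace E] {F : E → E} {K L : NNReal} (hF : LipschitzWith K F)
    (hL : ∀ x, ‖F x‖ ≤ L) (x₀ : E) :
    ∃ f : ℝ → E, f 0 = x₀ ∧ ∀ t ∈ Ici (0 : ℝ), HasDerivWithinAt f (F (f t)) (Ici 0) t := by
  have local_solution : ∀ N : ℕ, ∃ f : ℝ → E, f 0 = x₀ ∧
      ∀ t ∈ Icc (0 : ℝ) N, HasDerivWithinAt f (F (f t)) (Icc 0 N) t := by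
    intro N
    have hPL : IsPicardLindelof (fun _ => F)
        (⟨0, le_rfl, N.cast_nonneg⟩ : Icc (0 : ℝ) N) x₀ (L * N) 0 L K :=
      { lipschitzOnWith := fun _ _ => hF.lipschitzOnWith
        continuousOn := fun _ _ => continuousOn_const
        norm_le := fun _ _ x _ => hL x
        mul_max_le := by simp }
    exact hPL.exists_eq_forall_mem_Icc_hasDerivWithinAt₀
  choose f hf0 hf using local_solution
  have agree : ∀ M N : ℕ, M ≤ N → EqOn (f M) (f N) (Icc 0 M) := fun M N hMN =>
    eqOn_Icc_of_lipschitzWith hF (hf M)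
      (fun t ht => (hf N t ⟨ht.1, ht.2.trans (by exact_mod_cast hMN)⟩).mono
        (Icc_subset_Icc_right (by exact_mod_cast hMN)))
      (by rw [hf0, hf0])
  have eq_local : ∀ N : ℕ, EqOn (fun t => f (⌊t⌋₊ + 1) t) (f N) (Ico 0 N) := by
    intro N t ht
    refine agree _ _ ?_ ⟨ht.1, by exact_mod_cast (Nat.lt_floor_add_one t).le⟩
    exact (Nat.floor_lt ht.1).2 ht.2
  refine ⟨fun t => f (⌊t⌋₊ + 1) t, by simp [hf0], fun t ht => ?_⟩
  have htN : t < ((⌊t⌋₊ + 1 : ℕ) : ℝ) := by exact_mod_cast Nat.lt_floor_add_one t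
  have h1 : HasDerivWithinAt (f (⌊t⌋₊ + 1)) (F (f (⌊t⌋₊ + 1) t)) (Ici 0) t :=
    (hf _ t ⟨ht, htN.le⟩).mono_of_mem_nhdsWithin <| by
      rw [← Ici_inter_Iic]
      exact inter_mem self_mem_nhdsWithin (mem_nhdsWithin_of_mem_nhds (Iic_mem_nhds htN))
  refine h1.congr_of_eventuallyEq ?_ rfl
  filter_upwards [self_mem_nhdsWithin, mem_nhdsWithin_of_mem_nhds (Iio_mem_nhds htN)]
    with s hs hsN
  exact eq_local _ ⟨hs, hsN⟩

/-- The cotangent, regularised where `sin² < δ`. -/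
def truncCot (δ x : ℝ) : ℝ := Real.sin x * Real.cos x / max (Real.sin x ^ 2) δ

theorem truncCot_eq_cot {δ x : ℝ} (hδ : 0 < δ) (h : δ ≤ Real.sin x ^ 2) :
    truncCot δ x = Real.cot x := by
  have hs : Real.sin x ≠ 0 := fun h0 => by simp [h0] at h; linarith
  rw [truncCot, max_eq_left h, Real.cot_eq_cos_div_sin]
  field_simp

theorem abs_sin_mul_cos_le_one (x : ℝ) : |Real.sin x * Real.cos x| ≤ 1 := by
  rw [abs_mul]
  exact mul_le_one₀ (Real.abs_sin_le_one x) (abs_nonneg _) (Real.abs_cos_le_one x)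

theorem abs_truncCot_le {δ : ℝ} (hδ : 0 < δ) (x : ℝ) : |truncCot δ x| ≤ 1 / δ := by
  have hm : δ ≤ max (Real.sin x ^ 2) δ := le_max_right _ _
  rw [truncCot, abs_div, abs_of_pos (hδ.trans_le hm)]
  exact div_le_div₀ zero_le_one (abs_sin_mul_cos_le_one x) hδ hm

theorem abs_truncCot_sub_le {δ : ℝ} (hδ : 0 < δ) (x y : ℝ) :
    |truncCot δ x - truncCot δ y| ≤ (2 / δ + 2 / δ ^ 2) * |x - y| := by
  have hs := Real.abs_sin_sub_sin_le x y
  have hc := Real.abs_cos_sub_cos_le x y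
  have hnum : |Real.sin x * Real.cos x - Real.sin y * Real.cos y| ≤ 2 * |x - y| := by
    calc _ = |(Real.sin x - Real.sin y) * Real.cos x + Real.sin y * (Real.cos x - Real.cos y)| := by
          congr 1; ring
      _ ≤ |Real.sin x - Real.sin y| * |Real.cos x| + |Real.sin y| * |Real.cos x - Real.cos y| := by
          rw [← abs_mul, ← abs_mul]; exact abs_add_le _ _
      _ ≤ |x - y| * 1 + 1 * |x - y| := by
          gcongr
          · exact Real.abs_cos_le_one x
          · exact Real.abs_sin_le_one y
      _ = 2 * |x - y| := by ring
  have hden : |max (Real.sin y ^ 2) δ - max (Real.sin x ^ 2) δ| ≤ 2 * |x - y| := by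
    calc _ ≤ |Real.sin y ^ 2 - Real.sin x ^ 2| := abs_max_sub_max_le_abs _ _ _
      _ = |Real.sin x + Real.sin y| * |Real.sin x - Real.sin y| := by
          rw [abs_sub_comm, ← abs_mul]; congr 1; ring
      _ ≤ 2 * |x - y| := by
          gcongr
          calc _ ≤ |Real.sin x| + |Real.sin y| := abs_add_le _ _
            _ ≤ 2 := by linarith [Real.abs_sin_le_one x, Real.abs_sin_le_one y]
  have hx : δ ≤ max (Real.sin x ^ 2) δ := le_max_right _ _
  have hy : δ ≤ max (Real.sin y ^ 2) δ := le_max_right _ _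
  have hb := abs_sin_mul_cos_le_one y
  unfold truncCot
  generalize Real.sin x * Real.cos x = a at *
  generalize Real.sin y * Real.cos y = b at *
  generalize max (Real.sin x ^ 2) δ = p at *
  generalize max (Real.sin y ^ 2) δ = q at *
  have hp : 0 < p := hδ.trans_le hx
  have hq : 0 < q := hδ.trans_le hy
  calc |a / p - b / q| = |(a - b) / p + b * (q - p) / (p * q)| := by
        congr 1; field_simp; ring
    _ ≤ |a - b| / p + |b| * |q - p| / (p * q) := by
        refine (abs_add_le _ _).trans_eq ?_
        rw [abs_div, abs_div, abs_mul, abs_of_pos hp, abs_of_pos (mul_pos hp hq)]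
    _ ≤ 2 * |x - y| / δ + 1 * (2 * |x - y|) / (δ * δ) := by gcongr
    _ = (2 / δ + 2 / δ ^ 2) * |x - y| := by field_simp

/-- The vector field `2 φ` with the cotangent replaced by its regularisation. -/
def truncField {n : ℕ} (δ : ℝ) (x : Fin n → ℝ) (j : Fin n) : ℝ :=
  2 * ∑ k ∈ Finset.univ.erase j, truncCot δ ((x j - x k) / 2)

theorem norm_truncField_le {n : ℕ} {δ : ℝ} (hδ : 0 < δ) (x : Fin n → ℝ) :
    ‖truncField δ x‖ ≤ 2 * (n * (1 / δ)) := by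
  refine (pi_norm_le_iff_of_nonneg (by positivity)).2 fun j => ?_
  rw [truncField, Real.norm_eq_abs, abs_mul, abs_two]
  gcongr
  calc _ ≤ ∑ k ∈ Finset.univ.erase j, |truncCot δ ((x j - x k) / 2)| :=
        Finset.abs_sum_le_sum_abs _ _
    _ ≤ ∑ k : Fin n, |truncCot δ ((x j - x k) / 2)| :=
        Finset.sum_le_sum_of_subset_of_nonneg (Finset.subset_univ _) fun _ _ _ => abs_nonneg _
    _ ≤ ∑ _k : Fin n, 1 / δ := Finset.sum_le_sum fun _ _ => abs_truncCot_le hδ _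
    _ = n * (1 / δ) := by simp

theorem dist_truncField_le {n : ℕ} {δ : ℝ} (hδ : 0 < δ) (x y : Fin n → ℝ) :
    dist (truncField δ x) (truncField δ y) ≤ 2 * (n * (2 / δ + 2 / δ ^ 2)) * dist x y := by
  refine (dist_pi_le_iff (by positivity)).2 fun j => ?_
  rw [truncField, truncField, Real.dist_eq, ← mul_sub, ← Finset.sum_sub_distrib, abs_mul, abs_two,
    mul_assoc]
  gcongr
  calc _ ≤ ∑ k ∈ Finset.univ.erase j,
          |truncCot δ ((x j - x k) / 2) - truncCot δ ((y j - y k) / 2)| :=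
        Finset.abs_sum_le_sum_abs _ _
    _ ≤ ∑ k : Fin n, |truncCot δ ((x j - x k) / 2) - truncCot δ ((y j - y k) / 2)| :=
        Finset.sum_le_sum_of_subset_of_nonneg (Finset.subset_univ _) fun _ _ _ => abs_nonneg _
    _ ≤ ∑ _k : Fin n, (2 / δ + 2 / δ ^ 2) * dist x y := by
        refine Finset.sum_le_sum fun k _ => (abs_truncCot_sub_le hδ _ _).trans ?_
        gcongr
        have hj := abs_le.1 ((Real.dist_eq _ _).symm.trans_le (dist_le_pi_dist x y j))
        have hk := abs_le.1 ((Real.dist_eq _ _).symm.trans_le (dist_le_pi_dist x y k))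
        exact abs_le.2 ⟨by linarith [hj.1, hk.2], by linarith [hj.2, hk.1]⟩
    _ = n * (2 / δ + 2 / δ ^ 2) * dist x y := by simp [mul_assoc]

/-- The squared Vandermonde-type product `∏_{j ≠ k} sin²((θ^j - θ^k)/2)`. -/
def sinProd {n : ℕ} (x : Fin n → ℝ) : ℝ :=
  ∏ p ∈ (Finset.univ : Finset (Fin n)).offDiag, Real.sin ((x p.1 - x p.2) / 2) ^ 2

theorem sinProd_le_sin_sq {n : ℕ} (x : Fin n → ℝ) {j k : Fin n} (h : j ≠ k) :
    sinProd x ≤ Real.sin ((x j - x k) / 2) ^ 2 := by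
  have hmem : (j, k) ∈ (Finset.univ : Finset (Fin n)).offDiag := by simpa using h
  rw [sinProd, ← Finset.mul_prod_erase _ _ hmem]
  exact mul_le_of_le_one_right (sq_nonneg _)
    (Finset.prod_le_one (fun _ _ => sq_nonneg _) fun _ _ => Real.sin_sq_le_one _)

theorem sin_ne_zero_of_sinProd_pos {n : ℕ} {x : Fin n → ℝ} (hx : 0 < sinProd x) {j k : Fin n}
    (h : j ≠ k) : Real.sin ((x j - x k) / 2) ≠ 0 := fun h0 => by
  have := sinProd_le_sin_sq x h
  rw [h0] at this
  norm_num at this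
  linarith

theorem truncField_eq_phi {n : ℕ} {δ : ℝ} (hδ : 0 < δ) {x : Fin n → ℝ} (hx : δ ≤ sinProd x)
    (j : Fin n) : truncField δ x j = 2 * phi x j := by
  rw [truncField, phi]
  congr 1
  refine Finset.sum_congr rfl fun k hk => truncCot_eq_cot hδ ?_
  exact hx.trans (sinProd_le_sin_sq x (Finset.ne_of_mem_erase hk).symm)

theorem sinProd_pos_of_mem_Xspace {n : ℕ} {x : Fin n → ℝ} (hx : x ∈ Xspace n) :
    0 < sinProd x := by
  refine Finset.prod_pos fun p hp => ?_
  have key : ∀ j k : Fin n, j < k → 0 < Real.sin ((x k - x j) / 2) := fun j k h =>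
    Real.sin_pos_of_pos_of_lt_pi (by linarith [hx.1 h]) (by linarith [hx.2 k j])
  rcases lt_or_gt_of_ne (Finset.mem_offDiag.1 hp).2.2 with h | h
  · rw [show (x p.1 - x p.2) / 2 = -((x p.2 - x p.1) / 2) by ring, Real.sin_neg, neg_sq]
    exact pow_pos (key _ _ h) 2
  · exact pow_pos (key _ _ h) 2

/-- Summing `cot((θ^j - θ^k)/2) (v^j - v^k)` over ordered pairs symmetrises into `2 ∑ v^j φ^j`. -/
theorem sum_offDiag_cot_mul_sub {n : ℕ} (x v : Fin n → ℝ) :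
    ∑ p ∈ (Finset.univ : Finset (Fin n)).offDiag,
      Real.cot ((x p.1 - x p.2) / 2) * (v p.1 - v p.2) = 2 * ∑ j, v j * phi x j := by
  have half : ∑ p ∈ (Finset.univ : Finset (Fin n)).offDiag,
      Real.cot ((x p.1 - x p.2) / 2) * v p.1 = ∑ j, v j * phi x j := by
    rw [Finset.sum_finset_product' _ Finset.univ (fun j => Finset.univ.erase j)
      (f := fun j k => Real.cot ((x j - x k) / 2) * v j) (by simp [eq_comm])]
    exact Finset.sum_congr rfl fun j _ => by rw [phi, ← Finset.sum_mul, mul_comm]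
  have swap : ∑ p ∈ (Finset.univ : Finset (Fin n)).offDiag,
      Real.cot ((x p.1 - x p.2) / 2) * v p.2 = -∑ j, v j * phi x j := by
    rw [← half, ← Finset.sum_neg_distrib]
    refine Finset.sum_equiv (Equiv.prodComm _ _) (by simp [eq_comm]) fun p _ => ?_
    simp only [Equiv.prodComm_apply, Prod.fst_swap, Prod.snd_swap]
    rw [show (x p.2 - x p.1) / 2 = -((x p.1 - x p.2) / 2) by ring, Real.cot_eq_cos_div_sin,
      Real.cot_eq_cos_div_sin, Real.sin_neg, Real.cos_neg]
    ring
  simp only [mul_sub, Finset.sum_sub_distrib, half, swap]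
  ring

/-- The derivative of `sinProd` along a curve with velocity `v`. -/
def sinProdDeriv {n : ℕ} (x v : Fin n → ℝ) : ℝ :=
  ∑ p ∈ (Finset.univ : Finset (Fin n)).offDiag,
    (∏ q ∈ (Finset.univ : Finset (Fin n)).offDiag.erase p,
      Real.sin ((x q.1 - x q.2) / 2) ^ 2) *
    (Real.sin ((x p.1 - x p.2) / 2) * Real.cos ((x p.1 - x p.2) / 2) * (v p.1 - v p.2))

theorem hasDerivWithinAt_sinProd {n : ℕ} {x : ℝ → Fin n → ℝ} {v : Fin n → ℝ} {s : Set ℝ} {t : ℝ}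
    (hx : ∀ j, HasDerivWithinAt (fun r => x r j) (v j) s t) :
    HasDerivWithinAt (fun r => sinProd (x r)) (sinProdDeriv (x t) v) s t := by
  have h := HasDerivWithinAt.fun_finsetProd (u := (Finset.univ : Finset (Fin n)).offDiag)
    fun p _ => ((((hx p.1).sub (hx p.2)).div_const 2).sin.pow 2)
  refine h.congr_deriv ?_
  refine Finset.sum_congr rfl fun p _ => ?_
  simp only [smul_eq_mul, Pi.sub_apply, Pi.pow_apply]
  congr 1
  push_cast
  ring

theorem sinProdDeriv_two_phi_nonneg {n : ℕ} {x v : Fin n → ℝ} (hx : 0 < sinProd x)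
    (hv : ∀ j, v j = 2 * phi x j) : 0 ≤ sinProdDeriv x v := by
  have h : sinProdDeriv x v = sinProd x * (2 * ∑ j, v j * phi x j) := by
    rw [← sum_offDiag_cot_mul_sub, Finset.mul_sum, sinProdDeriv]
    refine Finset.sum_congr rfl fun p hp => ?_
    have hs := sin_ne_zero_of_sinProd_pos hx (Finset.mem_offDiag.1 hp).2.2
    rw [sinProd, ← Finset.mul_prod_erase _ _ hp, Real.cot_eq_cos_div_sin]
    field_simp
  rw [h]
  refine mul_nonneg hx.le (mul_nonneg zero_le_two (Finset.sum_nonneg fun j _ => ?_))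
  rw [hv]
  nlinarith [sq_nonneg (phi x j)]

/-- A curve which follows the flow as long as `sinProd > c / 2` and starts at `sinProd = c` never
leaves the region `sinProd > c / 2`. -/
theorem half_lt_sinProd_of_flow {n : ℕ} {x v : ℝ → Fin n → ℝ} {c : ℝ} (hc : 0 < c)
    (h0 : sinProd (x 0) = c)
    (hx : ∀ t ∈ Ici (0 : ℝ), ∀ j, HasDerivWithinAt (fun s => x s j) (v t j) (Ici 0) t)
    (hv : ∀ t ∈ Ici (0 : ℝ), c / 2 < sinProd (x t) → ∀ j, v t j = 2 * phi (x t) j) :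
    ∀ t ∈ Ici (0 : ℝ), c / 2 < sinProd (x t) := by
  intro T hT
  have hT : 0 ≤ T := hT
  have hd : ∀ t ∈ Ici (0 : ℝ), HasDerivWithinAt (fun r => c - sinProd (x r))
      (-sinProdDeriv (x t) (v t)) (Ici 0) t := fun t ht =>
    (hasDerivWithinAt_sinProd (hx t ht)).const_sub c
  have slope_lt : ∀ t, t ≤ T → c / 2 / (T + 1) * t < c / 2 := fun t ht => by
    rw [div_mul_eq_mul_div, div_lt_iff₀ (by linarith)]
    nlinarith
  have key := image_le_of_deriv_right_lt_deriv_boundary (a := 0) (b := T)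
    (f := fun r => c - sinProd (x r)) (f' := fun t => -sinProdDeriv (x t) (v t))
    (B := fun t => c / 2 / (T + 1) * t) (B' := fun _ => c / 2 / (T + 1))
    (fun t ht => (hd t ht.1).continuousWithinAt.mono Icc_subset_Ici_self)
    (fun t ht => (hd t ht.1).mono (Ici_subset_Ici.2 ht.1))
    (by simp [h0]) (fun t => by simpa using (hasDerivAt_id t).const_mul (c / 2 / (T + 1)))
    (fun t ht heq => by
      have hlt := slope_lt t ht.2.le
      have hpos : c / 2 < sinProd (x t) := by linarith
      have := sinProdDeriv_two_phi_nonneg (by linarith) (hv t ht.1 hpos)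
      have : 0 < c / 2 / (T + 1) := by positivity
      linarith)
    ⟨hT, le_rfl⟩
  have := slope_lt T le_rfl
  linarith

/-- A continuous curve along which `sinProd` stays positive cannot leave `𝒳ₙ`. -/
theorem mem_Xspace_of_sinProd_pos {n : ℕ} {x : ℝ → Fin n → ℝ}
    (hcont : ∀ j, ContinuousOn (fun s => x s j) (Ici 0)) (h0 : x 0 ∈ Xspace n)
    (hpos : ∀ t ∈ Ici (0 : ℝ), 0 < sinProd (x t)) : ∀ t ∈ Ici (0 : ℝ), x t ∈ Xspace n := by
  intro t ht
  have ht : 0 ≤ t := ht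
  have hne : ∀ s ∈ Icc 0 t, ∀ j k : Fin n, j < k → Real.sin ((x s k - x s j) / 2) ≠ 0 :=
    fun s hs j k hjk => sin_ne_zero_of_sinProd_pos (hpos s hs.1) hjk.ne'
  have hc : ∀ j k : Fin n, ContinuousOn (fun s => x s k - x s j) (Icc 0 t) := fun j k =>
    ((hcont k).sub (hcont j)).mono Icc_subset_Ici_self
  have lower : ∀ j k : Fin n, j < k → x t j < x t k := fun j k hjk => by
    by_contra! hle
    obtain ⟨s, hs, hzero⟩ := intermediate_value_Icc' ht (hc j k)
      (show (0 : ℝ) ∈ Icc (x t k - x t j) (x 0 k - x 0 j) from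
        ⟨by linarith, by linarith [h0.1 hjk]⟩)
    refine hne s hs j k hjk ?_
    simp only at hzero
    simp [hzero]
  have upper : ∀ j k : Fin n, j < k → x t k < x t j + 2 * π := fun j k hjk => by
    by_contra! hle
    obtain ⟨s, hs, hturn⟩ := intermediate_value_Icc ht (hc j k)
      (show 2 * π ∈ Icc (x 0 k - x 0 j) (x t k - x t j) from
        ⟨by linarith [h0.2 k j], by linarith⟩)
    refine hne s hs j k hjk ?_
    simp only at hturn
    simp [hturn]
  refine ⟨fun j k hjk => lower j k hjk, fun i j => ?_⟩
  rcases lt_trichotomy i j with h | h | h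
  · linarith [lower i j h, Real.pi_pos]
  · rw [h]; linarith [Real.pi_pos]
  · exact upper j i h

/-- For each initial configuration `θ₀ ∈ 𝒳ₙ`, the system
`dθ^j_t/dt = 2 φ^j(θ_t)` has a unique differentiable solution `θ : [0,∞) → 𝒳ₙ`
with `θ(0) = θ₀`. -/
theorem zero_energy_flow_exists_unique
    (n : ℕ) (hn : 1 ≤ n) (θ₀ : Fin n → ℝ) (h₀ : θ₀ ∈ Xspace n) :
    ∃ θ : ℝ → Fin n → ℝ,
      (θ 0 = θ₀ ∧ (∀ t ∈ Ici (0 : ℝ), θ t ∈ Xspace n) ∧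
        ∀ t ∈ Ici (0 : ℝ), ∀ j : Fin n,
          HasDerivWithinAt (fun s => θ s j) (2 * phi (θ t) j) (Ici 0) t) ∧
      ∀ θ' : ℝ → Fin n → ℝ,
        (θ' 0 = θ₀ ∧ (∀ t ∈ Ici (0 : ℝ), θ' t ∈ Xspace n) ∧
          ∀ t ∈ Ici (0 : ℝ), ∀ j : Fin n,
            HasDerivWithinAt (fun s => θ' s j) (2 * phi (θ' t) j) (Ici 0) t) →
        ∀ t ∈ Ici (0 : ℝ), θ' t = θ t := by
  have hc := sinProd_pos_of_mem_Xspace h₀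
  set c := sinProd θ₀
  have hδ : 0 < c / 2 := by positivity
  have hLip : LipschitzWith (2 * (n * (2 / (c / 2) + 2 / (c / 2) ^ 2))).toNNReal
      (truncField (n := n) (c / 2)) := LipschitzWith.of_dist_le_mul fun x y => by
    rw [Real.coe_toNNReal _ (by positivity)]
    exact dist_truncField_le hδ x y
  obtain ⟨θ, hθ0, hθ⟩ := exists_hasDerivWithinAt_Ici_of_lipschitzWith hLip
    (L := (2 * (n * (1 / (c / 2)))).toNNReal)
    (fun x => by rw [Real.coe_toNNReal _ (by positivity)]; exact norm_truncField_le hδ x) θ₀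
  have hθj : ∀ t ∈ Ici (0 : ℝ), ∀ j,
      HasDerivWithinAt (fun s => θ s j) (truncField (c / 2) (θ t) j) (Ici 0) t := fun t ht =>
    hasDerivWithinAt_pi.1 (hθ t ht)
  have hlow := half_lt_sinProd_of_flow hc (by rw [hθ0]) hθj
    fun t _ h j => truncField_eq_phi hδ h.le j
  refine ⟨θ, ⟨hθ0, ?_, fun t ht j => ?_⟩, ?_⟩
  · exact mem_Xspace_of_sinProd_pos (fun j t ht => (hθj t ht j).continuousWithinAt)
      (by rwa [hθ0]) fun t ht => hδ.trans (hlow t ht)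
  · rw [← truncField_eq_phi hδ (hlow t ht).le]
    exact hθj t ht j
  · rintro η ⟨hη0, -, hη⟩ t ht
    have hηlow := half_lt_sinProd_of_flow hc (by rw [hη0]) hη fun _ _ _ _ => rfl
    have hηF : ∀ s ∈ Ici (0 : ℝ),
        HasDerivWithinAt η (truncField (c / 2) (η s)) (Ici 0) s := fun s hs =>
      hasDerivWithinAt_pi.2 fun j => by
        rw [truncField_eq_phi hδ (hηlow s hs).le]
        exact hη s hs j
    exact eqOn_Icc_of_lipschitzWith hLip
      (fun s hs => (hηF s hs.1).mono Icc_subset_Ici_self)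
      (fun s hs => (hθ s hs.1).mono Icc_subset_Ici_self) (hη0.trans hθ0.symm) ⟨ht, le_rfl⟩

end
end
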